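/- Markov-type inequality for exponential sums (discrete form): let u(t) = c₀ + Σ_{i=1}^m cᵢ γᵢ^t with cᵢ ∈ ℝ and γᵢ > 0, viewed as a function on [0, ∞). Then for every integer t ≥ 1, |u(t+1) − u(t)| ≤ (2m/t) · sup_{s ≥ 0} |u(s)|. -/

import Mathlib

/-!
Fix `t > 0` and put `d = t + 1/2`. The odd part of `z ↦ u (d + d * z)` is a linear combination of
`m` functions `sinh (l * z)`, it is bounded by `B` on `(0, 1]`, and its value at `h = 1 / (2t + 1)`
is `(u (t + 1) - u t) / 2`. So it suffices to bound `f h` for `f` in the span of `n + 1` functions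
`sinh (l * z)`, `l ∈ L`, with `|f| ≤ B` on `(0, 1]`.

By Rolle's theorem such spans are Haar spaces. Hence, if `q` in the span interpolates `(-1) ^ i` at
`n + 1` nodes to the right of `h`, then `f h ≤ B * q h`. Replacing frequencies by smaller ones, one
at a time, only increases `q h`. One may therefore take the frequencies to be
`ε, 3 * ε, …, (2 * n + 1) * ε` with `ε` small, where the interpolant is explicit: under
`sinh (ε * z) = sinh ε * sin θ` it is `sin ((2 * n + 1) * θ)`. Its value at `h` is at most
`(2 * n + 1) * arcsin h`, and `arcsin (1 / (2t + 1)) ≤ 1 / (2t)`.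
-/

open Set Filter Asymptotics Submodule Real
open scoped Finset

lemma card_le_encard_add_one_of_interleaved {α : Type*} [LinearOrder α] {S : Finset α} {T : Set α}
    (h : ∀ x ∈ S, ∀ y ∈ S, x < y → (∀ z ∈ S, z ∉ Ioo x y) → ∃ z ∈ T, x < z ∧ z < y) :
    (#S : ℕ∞) ≤ T.encard + 1 := by
  rcases T.finite_or_infinite with hT | hT
  · rw [hT.encard_eq_coe_toFinset_card]
    have hcard : #S ≤ #hT.toFinset + 1 := Finset.card_le_of_interleaved (by simpa using h)
    exact_mod_cast hcard
  · simp [hT.encard_eq]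

lemma encard_zeros_le_encard_zeros_deriv_add_one {f f' : ℝ → ℝ}
    (hf : ∀ t, HasDerivAt f (f' t) t) :
    {t | f t = 0}.encard ≤ {t | f' t = 0}.encard + 1 := by
  refine ENat.forall_natCast_le_iff_le.1 fun k hk ↦ ?_
  obtain ⟨S, hS, hSk⟩ := exists_subset_encard_eq hk
  lift S to Finset ℝ using finite_of_encard_eq_coe hSk
  rw [← hSk, encard_coe_eq_coe_finsetCard]
  refine card_le_encard_add_one_of_interleaved fun x hx y hy hxy _ ↦ ?_
  obtain ⟨z, hz, hz0⟩ := exists_hasDerivAt_eq_zero hxy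
    (fun t _ ↦ (hf t).continuousAt.continuousWithinAt) ((hS hx).trans (hS hy).symm)
    (fun t _ ↦ hf t)
  exact ⟨z, hz0, hz⟩

lemma le_encard_zeros_of_alternating {f : ℝ → ℝ} {s : Set ℝ} (hs : s.OrdConnected)
    (hf : ContinuousOn f s) {n : ℕ} {y : Fin (n + 1) → ℝ} (hy : StrictMono y)
    (hys : ∀ i, y i ∈ s) (halt : ∀ i : Fin (n + 1), 0 < (-1) ^ (i : ℕ) * f (y i)) :
    (n : ℕ∞) ≤ {z ∈ s | f z = 0}.encard := by
  suffices h : (#(Finset.univ.image y) : ℕ∞) ≤ {z ∈ s | f z = 0}.encard + 1 by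
    rw [Finset.card_image_of_injective _ hy.injective, Finset.card_fin] at h
    exact (ENat.add_le_add_iff_right ENat.one_ne_top).1 (by exact_mod_cast h)
  refine card_le_encard_add_one_of_interleaved ?_
  simp only [Finset.mem_image, Finset.mem_univ, true_and, forall_exists_index,
    forall_apply_eq_imp_iff, hy.lt_iff_lt, mem_Ioo]
  intro i j hij hconsecutive
  have hj : (j : ℕ) = i + 1 := by
    have := hconsecutive ⟨i + 1, by omega⟩
    simp only [Fin.lt_def] at this hij
    omega
  have hIcc : Icc (y i) (y j) ⊆ s := hs.out (hys i) (hys j)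
  have hneg : (-1) ^ (i : ℕ) * f (y j) < 0 := by
    have := halt j
    rw [hj, pow_succ] at this
    linarith
  obtain ⟨z, hz, hz0⟩ := intermediate_value_Ioo' (hy hij).le
    ((hf.mono hIcc).const_mul ((-1) ^ (i : ℕ))) ⟨hneg, halt i⟩
  exact ⟨z, ⟨hIcc (Ioo_subset_Icc_self hz), by simpa using hz0⟩, hz⟩

lemma strictMono_snoc {α : Type*} [Preorder α] {n : ℕ} {y : Fin (n + 1) → α} (hy : StrictMono y)
    {Y : α} (hY : y (Fin.last n) < Y) : StrictMono (Fin.snoc y Y : Fin (n + 2) → α) := by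
  refine Fin.strictMono_iff_lt_succ.2 (Fin.lastCases ?_ fun i ↦ ?_)
  · rw [Fin.snoc_castSucc, Fin.succ_last, Fin.snoc_last]
    exact hY
  · rw [Fin.snoc_castSucc, Fin.succ_castSucc, Fin.snoc_castSucc]
    exact hy i.castSucc_lt_succ

/-- `V` is an `n`-dimensional Haar space on `s`: a space of functions continuous on `s` in which a
nonzero element has fewer than `n` zeros in `s`. The elements of `V` are functions on all of `ℝ`,
and `f ≠ 0` means that `f` is not the zero function on `ℝ`. -/
structure IsHaarSpace (V : Submodule ℝ (ℝ → ℝ)) (s : Set ℝ) (n : ℕ) : Prop where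
  continuousOn : ∀ f ∈ V, ContinuousOn f s
  finrank_eq : Module.finrank ℝ V = n
  encard_zeros_lt : ∀ f ∈ V, f ≠ 0 → {z ∈ s | f z = 0}.encard < n

namespace IsHaarSpace

variable {V : Submodule ℝ (ℝ → ℝ)} {s : Set ℝ} {n : ℕ}

theorem exists_interpolant (hV : IsHaarSpace V s n) {x : Fin n → ℝ} (hx : x.Injective)
    (hxs : ∀ i, x i ∈ s) (v : Fin n → ℝ) : ∃ f ∈ V, ∀ i, f (x i) = v i := by
  let evalNodes : V →ₗ[ℝ] Fin n → ℝ := LinearMap.funLeft ℝ ℝ x ∘ₗ V.subtype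
  have hinj : Function.Injective evalNodes := by
    refine (injective_iff_map_eq_zero _).2 fun f hf ↦ by_contra fun hne ↦ ?_
    have hzeros : range x ⊆ {z ∈ s | (f : ℝ → ℝ) z = 0} := by
      rintro _ ⟨i, rfl⟩
      exact ⟨hxs i, congrFun hf i⟩
    have hlt := hV.encard_zeros_lt f f.2 (by simpa using hne)
    have hle := encard_le_encard hzeros
    rw [← image_univ, hx.encard_image, encard_univ, ENat.card_eq_coe_fintype_card,
      Fintype.card_fin] at hle
    exact hle.not_gt hlt
  have := Module.Finite.of_injective evalNodes hinj
  obtain ⟨f, hf⟩ := (LinearMap.injective_iff_surjective_of_finrank_eq_finrank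
    (by simp [hV.finrank_eq])).1 hinj v
  exact ⟨f, f.2, congrFun hf⟩

theorem apply_zero_nonpos_of_alternating (hV : IsHaarSpace V s n) (hs : s.OrdConnected)
    {y : Fin (n + 1) → ℝ} (hy : StrictMono y) (hys : ∀ i, y i ∈ s) {f : ℝ → ℝ} (hf : f ∈ V)
    (halt : ∀ i : Fin n, (-1) ^ (i : ℕ) * f (y i.succ) ≤ 0) : f (y 0) ≤ 0 := by
  by_contra! hpos
  obtain ⟨g, hgV, hg⟩ := hV.exists_interpolant (hy.injective.comp (Fin.succ_injective n))
    (fun i ↦ hys i.succ) fun i ↦ (-1) ^ (i : ℕ)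
  -- Subtracting a small multiple of `g` turns the weak alternation of `f` into a strict one.
  obtain ⟨δ, hδ, hδlt⟩ := exists_pos_mul_lt hpos (g (y 0))
  have hmem : f - δ • g ∈ V := V.sub_mem hf (V.smul_mem δ hgV)
  have hpos' : 0 < (f - δ • g) (y 0) := by
    simp only [Pi.sub_apply, Pi.smul_apply, smul_eq_mul]
    linarith
  have hstrict : ∀ i : Fin (n + 1), 0 < (-1) ^ (i : ℕ) * (f - δ • g) (y i) := by
    refine Fin.cases (by simpa using hpos') fun i ↦ ?_
    have hgi : g (y i.succ) = (-1) ^ (i : ℕ) := hg i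
    have hsq : ((-1 : ℝ) ^ (i : ℕ)) * (-1) ^ (i : ℕ) = 1 := by rw [← mul_pow]; simp
    calc 0 < δ - (-1) ^ (i : ℕ) * f (y i.succ) := by linarith [halt i]
      _ = _ := by
        simp only [Fin.val_succ, Pi.sub_apply, Pi.smul_apply, smul_eq_mul, hgi, pow_succ]
        linear_combination (-δ) * hsq
  refine (le_encard_zeros_of_alternating hs (hV.continuousOn _ hmem) hy hys hstrict).not_gt
    (hV.encard_zeros_lt _ hmem fun h0 ↦ ?_)
  exact hpos'.ne' (congrFun h0 _)

theorem apply_zero_nonpos_of_alternating_snoc (hV : IsHaarSpace V s (n + 1))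
    (hs : s.OrdConnected) {y : Fin (n + 1) → ℝ} (hy : StrictMono y) (hys : ∀ i, y i ∈ s) {Y : ℝ}
    (hYs : Y ∈ s) (hY : y (Fin.last n) < Y) {f : ℝ → ℝ} (hf : f ∈ V)
    (halt : ∀ i : Fin n, (-1) ^ (i : ℕ) * f (y i.succ) ≤ 0) (haltY : (-1) ^ n * f Y ≤ 0) :
    f (y 0) ≤ 0 := by
  rw [← Fin.snoc_castSucc (α := fun _ ↦ ℝ) Y y 0]
  refine hV.apply_zero_nonpos_of_alternating hs (strictMono_snoc hy hY)
    (Fin.lastCases (by simpa using hYs) (by simpa using hys)) hf (Fin.lastCases ?_ fun i ↦ ?_)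
  · rwa [Fin.succ_last, Fin.snoc_last, Fin.val_last]
  · rw [Fin.succ_castSucc, Fin.snoc_castSucc, Fin.val_castSucc]
    exact halt i

end IsHaarSpace

lemma eventually_pos_mul_add_of_isLittleO {φ g : ℝ → ℝ} (hφ : ∀ᶠ t in atTop, 0 < φ t)
    (hg : g =o[atTop] φ) {c : ℝ} (hc : 0 < c) : ∀ᶠ t in atTop, 0 < c * φ t + g t := by
  filter_upwards [hφ, hg.def (half_pos hc)] with t ht hgt
  rw [norm_eq_abs, norm_eq_abs, abs_of_pos ht] at hgt
  nlinarith [neg_abs_le (g t)]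

/-- A family indexed by a linear order is a Chebyshev scale on the interval `s` if it is strictly
increasing in order of growth at infinity and every finite subfamily spans a Haar space on `s` of
full dimension. Requiring `s` to reach `+∞` makes the growth rates visible inside `s`, so that the
sign of a leading coefficient can be tested by an additional node. -/
structure IsChebyshevScale {ι : Type*} [LinearOrder ι] (φ : ι → ℝ → ℝ) (s : Set ℝ) : Prop where
  ordConnected : s.OrdConnected
  eventually_mem : ∀ᶠ t in atTop, t ∈ s
  isHaarSpace : ∀ A : Finset ι, IsHaarSpace (span ℝ (φ '' A)) s #A
  eventually_pos : ∀ i, ∀ᶠ t in atTop, 0 < φ i t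
  isLittleO : ∀ {i j}, i < j → φ i =o[atTop] φ j

namespace IsChebyshevScale

variable {ι : Type*} [LinearOrder ι] {φ : ι → ℝ → ℝ} {s : Set ℝ} {A : Finset ι} {a : ι}

theorem isLittleO_of_mem_span (hφ : IsChebyshevScale φ s) (hA : ∀ i ∈ A, i < a) {f : ℝ → ℝ}
    (hf : f ∈ span ℝ (φ '' A)) : f =o[atTop] φ a := by
  induction hf using span_induction with
  | mem _ hg =>
    obtain ⟨i, hi, rfl⟩ := hg
    exact hφ.isLittleO (hA i hi)
  | zero => exact isLittleO_zero _ _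
  | add _ _ _ _ hg hg' => exact hg.add hg'
  | smul c _ _ hg => exact hg.const_mul_left c

theorem exists_node_pos (hφ : IsChebyshevScale φ s) (hA : ∀ i ∈ A, i < a) {f : ℝ → ℝ}
    (hf : f ∈ span ℝ (φ '' A)) {c : ℝ} (hc : 0 < c) (X : ℝ) :
    ∃ Y ∈ s, X < Y ∧ 0 < c * φ a Y + f Y :=
  (hφ.eventually_mem.and ((eventually_gt_atTop X).and (eventually_pos_mul_add_of_isLittleO
    (hφ.eventually_pos a) (hφ.isLittleO_of_mem_span hA hf) hc))).exists

theorem neg_one_pow_mul_coeff_nonpos_of_alternating (hφ : IsChebyshevScale φ s)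
    (hA : ∀ i ∈ A, i < a) {x : Fin (#A + 1) → ℝ} (hx : StrictMono x)
    (hxs : ∀ i, x i ∈ s) {f : ℝ → ℝ} (hf : f ∈ span ℝ (φ '' A)) {c : ℝ}
    (halt : ∀ i : Fin (#A + 1), (c • φ a + f) (x i) = (-1) ^ (i : ℕ)) :
    (-1) ^ (#A + 1) * c ≤ 0 := by
  by_contra! hpos
  obtain ⟨Y, hYs, hY, hYpos⟩ := hφ.exists_node_pos hA (smul_mem _ ((-1) ^ (#A + 1)) hf) hpos
    (x (Fin.last _))
  have haA : a ∉ A := fun h ↦ (hA a h).false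
  have hH := hφ.isHaarSpace (insert a A)
  rw [Finset.card_insert_of_notMem haA, Finset.coe_insert, image_insert_eq] at hH
  have hle := hH.apply_zero_nonpos_of_alternating_snoc hφ.ordConnected hx hxs hYs hY
    (mem_span_insert.2 ⟨c, f, hf, rfl⟩)
    (fun i ↦ by rw [halt, Fin.val_succ, pow_succ, ← mul_assoc, ← mul_pow]; simp)
    (by
      simp only [Pi.add_apply, Pi.smul_apply, smul_eq_mul, pow_succ] at hYpos ⊢
      linarith)
  rw [halt] at hle
  norm_num at hle

/-- `q - p` vanishes at all nodes but `y 0`, so its sign at `y 0` is decided by its sign at `+∞`,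
which is that of the coefficient of `φ a` in `q`. -/
theorem apply_le_of_exchange (hφ : IsChebyshevScale φ s) {r : ι} (hr : r ∉ A) (hra : r < a)
    (hA : ∀ i ∈ A, i < a) {y : Fin (#A + 2) → ℝ} (hy : StrictMono y) (hys : ∀ i, y i ∈ s)
    {p q : ℝ → ℝ} (hp : p ∈ span ℝ (φ '' insert r A)) (hq : q ∈ span ℝ (φ '' insert a A))
    (hpalt : ∀ i : Fin (#A + 1), p (y i.succ) = (-1) ^ (i : ℕ))
    (hqalt : ∀ i : Fin (#A + 1), q (y i.succ) = (-1) ^ (i : ℕ)) : q (y 0) ≤ p (y 0) := by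
  obtain ⟨c, q₀, hq₀, rfl⟩ := mem_span_insert.1 (image_insert_eq (f := φ) ▸ hq)
  have hlead : (-1) ^ (#A + 1) * c ≤ 0 := hφ.neg_one_pow_mul_coeff_nonpos_of_alternating
    hA (hy.comp Fin.strictMono_succ) (fun i ↦ hys i.succ) hq₀ hqalt
  have hrA : ∀ i ∈ insert r A, i < a := by simpa [hra] using hA
  have hdiff : q₀ - p ∈ span ℝ (φ '' (insert r A : Finset ι)) := by
    rw [Finset.coe_insert]
    exact sub_mem (span_mono (image_mono (subset_insert _ _)) hq₀) hp
  have hzero : ∀ i : Fin (#A + 1), (c • φ a + (q₀ - p)) (y i.succ) = 0 := fun i ↦ by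
    rw [add_sub, Pi.sub_apply, hpalt, hqalt, sub_self]
  suffices h : (c • φ a + (q₀ - p)) (y 0) ≤ 0 by
    rwa [add_sub, Pi.sub_apply, sub_nonpos] at h
  have hcard : #(insert r A) = #A + 1 := Finset.card_insert_of_notMem hr
  rcases hlead.eq_or_lt with hc | hc
  · obtain rfl : c = 0 := by simpa using hc
    have hH := hφ.isHaarSpace (insert r A)
    rw [hcard] at hH
    exact hH.apply_zero_nonpos_of_alternating hφ.ordConnected hy hys
      (by simpa using hdiff) fun i ↦ by rw [hzero, mul_zero]
  · obtain ⟨Y, hYs, hY, hYpos⟩ := hφ.exists_node_pos hrA (smul_mem _ (-(-1) ^ (#A + 1)) hdiff)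
      (c := -(-1) ^ (#A + 1) * c) (by linarith) (y (Fin.last _))
    have hH := hφ.isHaarSpace (insert a (insert r A))
    rw [Finset.card_insert_of_notMem fun h ↦ (hrA a h).false, hcard, Finset.coe_insert,
      image_insert_eq] at hH
    refine hH.apply_zero_nonpos_of_alternating_snoc hφ.ordConnected hy hys hYs hY
      (mem_span_insert.2 ⟨c, q₀ - p, hdiff, rfl⟩) (fun i ↦ by rw [hzero, mul_zero]) ?_
    simp only [Pi.add_apply, Pi.smul_apply, smul_eq_mul] at hYpos ⊢
    linarith

theorem apply_le_of_forall_lt (hφ : IsChebyshevScale φ s) {M L : Finset ι}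
    (hML : ∀ i ∈ M, ∀ j ∈ L, i < j) {n : ℕ} (hM : #M = n) (hL : #L = n)
    {y : Fin (n + 1) → ℝ} (hy : StrictMono y) (hys : ∀ i, y i ∈ s) {p q : ℝ → ℝ}
    (hp : p ∈ span ℝ (φ '' M)) (hq : q ∈ span ℝ (φ '' L))
    (hpalt : ∀ i : Fin n, p (y i.succ) = (-1) ^ (i : ℕ))
    (hqalt : ∀ i : Fin n, q (y i.succ) = (-1) ^ (i : ℕ)) : q (y 0) ≤ p (y 0) := by
  suffices h : ∀ M' ⊆ M, #M' + #L = n → ∀ q ∈ span ℝ (φ '' (M' ∪ L : Finset ι)),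
      (∀ i : Fin n, q (y i.succ) = (-1) ^ (i : ℕ)) → q (y 0) ≤ p (y 0) from
    h ∅ (Finset.empty_subset M) (by simpa using hL) q (by simpa using hq) hqalt
  clear hq hqalt hL q
  induction L using Finset.induction_on_max with
  | empty =>
    intro M' hM' hcard' q hq hqalt
    obtain rfl : M' = M := Finset.eq_of_subset_of_card_le hM' (by simp_all)
    have hH := hM ▸ hφ.isHaarSpace M'
    refine sub_nonpos.1 (hH.apply_zero_nonpos_of_alternating hφ.ordConnected hy hys
      (sub_mem (by simpa using hq) hp) fun i ↦ ?_)
    simp [hpalt i, hqalt i]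
  | insert a L hLa ih =>
    intro M' hM' hcard' q hq hqalt
    rw [Finset.card_insert_of_notMem fun h ↦ (hLa a h).false] at hcard'
    obtain ⟨r, hrM, hrM'⟩ := Finset.exists_mem_notMem_of_card_lt_card (by omega : #M' < #M)
    have hML' : ∀ i ∈ M, ∀ j ∈ L, i < j := fun i hi j hj ↦ hML i hi j (by simp [hj])
    have hrL : r ∉ L := fun h ↦ (hML' r hrM r h).false
    have hdisj : Disjoint M' L :=
      Finset.disjoint_left.2 fun i hi hi' ↦ (hML' i (hM' hi) i hi').false
    have hcardA : #(M' ∪ L) + 1 = n := by rw [Finset.card_union_of_disjoint hdisj]; omega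
    have hA : ∀ i ∈ M' ∪ L, i < a := fun i hi ↦ (Finset.mem_union.1 hi).elim
      (fun hi ↦ hML i (hM' hi) a (by simp)) (hLa i)
    have hr : r ∉ M' ∪ L := by simp [hrM', hrL]
    subst hcardA
    obtain ⟨q₁, hq₁, hq₁alt⟩ := (Finset.card_insert_of_notMem hr ▸
      hφ.isHaarSpace (insert r (M' ∪ L))).exists_interpolant
      (hy.injective.comp (Fin.succ_injective _)) (fun i ↦ hys i.succ) fun i ↦ (-1) ^ (i : ℕ)
    calc q (y 0) ≤ q₁ (y 0) := hφ.apply_le_of_exchange hr (hML r hrM a (by simp)) hA hy hys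
          (by simpa using hq₁) (by simpa using hq) hq₁alt hqalt
      _ ≤ p (y 0) := ih hML' (insert r M') (Finset.insert_subset hrM hM')
          (by rw [Finset.card_insert_of_notMem hrM']; omega) q₁ (by simpa using hq₁) hq₁alt

end IsChebyshevScale

theorem isHaarSpace_span_image {ι : Type*} {φ : ι → ℝ → ℝ} {s : Set ℝ} {A : Finset ι}
    (hs : s.Infinite) (hcont : ∀ i ∈ A, ContinuousOn (φ i) s)
    (hzeros : ∀ b : ι → ℝ, (∃ i ∈ A, b i ≠ 0) →
      {z ∈ s | ∑ i ∈ A, b i * φ i z = 0}.encard < #A) :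
    IsHaarSpace (span ℝ (φ '' A)) s #A where
  continuousOn f hf := by
    induction hf using span_induction with
    | mem _ hg =>
      obtain ⟨i, hi, rfl⟩ := hg
      exact hcont i hi
    | zero => exact continuousOn_const
    | add _ _ _ _ hg hg' => exact hg.add hg'
    | smul c _ _ hg => exact hg.const_smul c
  finrank_eq := by
    have hindep : LinearIndepOn ℝ φ (A : Set ι) := by
      refine linearIndepOn_finset_iff.2 fun b hb ↦ ?_
      by_contra! hne
      have hall : {z ∈ s | ∑ i ∈ A, b i * φ i z = 0} = s :=
        sep_eq_self_iff_mem_true.2 fun z _ ↦ by simpa using congrFun hb z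
      have hlt := hzeros b hne
      rw [hall, hs.encard_eq] at hlt
      exact not_top_lt hlt
    rw [image_eq_range]
    simpa using finrank_span_eq_card hindep
  encard_zeros_lt f hf hne := by
    obtain ⟨b, rfl⟩ := mem_span_image_finset_iff_exists_fun' ℝ |>.1 hf
    have hb : ∃ i ∈ A, b i ≠ 0 := by
      by_contra! hb
      exact hne (Finset.sum_eq_zero fun i hi ↦ by rw [hb i hi, zero_smul])
    simpa using hzeros b hb

lemma sum_mul_exp_sub_mul_eq_zero_iff {ι : Type*} {A : Finset ι} {l b : ι → ℝ} {m t : ℝ} :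
    ∑ i ∈ A, b i * exp ((l i - m) * t) = 0 ↔ ∑ i ∈ A, b i * exp (l i * t) = 0 := by
  have hfactor : ∑ i ∈ A, b i * exp (l i * t) =
      exp (m * t) * ∑ i ∈ A, b i * exp ((l i - m) * t) := by
    rw [Finset.mul_sum]
    refine Finset.sum_congr rfl fun i _ ↦ ?_
    rw [mul_left_comm, ← exp_add]
    ring_nf
  simp [hfactor]

theorem encard_zeros_sum_exp_lt {ι : Type*} {A : Finset ι} {l b : ι → ℝ} (hl : InjOn l A)
    (hb : ∃ i ∈ A, b i ≠ 0) : {t | ∑ i ∈ A, b i * exp (l i * t) = 0}.encard < #A := by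
  classical
  induction A using Finset.induction_on generalizing b with
  | empty => simp at hb
  | insert a A ha ih =>
    rw [Finset.card_insert_of_notMem ha, Nat.cast_add_one]
    by_cases hbA : ∃ i ∈ A, b i ≠ 0
    · have hne : ∃ i ∈ A, (l i - l a) * b i ≠ 0 := by
        obtain ⟨i, hi, hbi⟩ := hbA
        have hia : i ≠ a := fun h ↦ ha (h ▸ hi)
        exact ⟨i, hi, mul_ne_zero (sub_ne_zero.2 fun h ↦ hia (hl (by simp [hi]) (by simp) h)) hbi⟩
      calc {t | ∑ i ∈ insert a A, b i * exp (l i * t) = 0}.encard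
          = {t | ∑ i ∈ insert a A, b i * exp ((l i - l a) * t) = 0}.encard := by
            simp only [sum_mul_exp_sub_mul_eq_zero_iff]
        _ ≤ {t | ∑ i ∈ insert a A, (l i - l a) * b i * exp ((l i - l a) * t) = 0}.encard + 1 :=
          encard_zeros_le_encard_zeros_deriv_add_one fun t ↦ .fun_sum fun i _ ↦ by
            convert! ((hasDerivAt_id t).const_mul (l i - l a)).exp.const_mul (b i) using 1
            simp only [id]
            ring
        _ = {t | ∑ i ∈ A, (l i - l a) * b i * exp (l i * t) = 0}.encard + 1 := by
          simp only [sum_mul_exp_sub_mul_eq_zero_iff, Finset.sum_insert ha, sub_self, zero_mul,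
            zero_add]
        _ < #A + 1 :=
          (ENat.add_lt_add_iff_right ENat.one_ne_top).2 (ih (hl.mono (by simp)) hne)
    · have hba : b a ≠ 0 := by simpa [or_and_right, exists_or, hbA] using hb
      push Not at hbA
      have hempty : {t | ∑ i ∈ insert a A, b i * exp (l i * t) = 0} = ∅ := by
        refine eq_empty_of_forall_notMem fun t ht ↦ ?_
        rw [mem_ofPred, Finset.sum_insert ha,
          Finset.sum_eq_zero fun i hi ↦ by rw [hbA i hi, zero_mul], add_zero] at ht
        exact mul_ne_zero hba (exp_ne_zero _) ht
      simp [hempty]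

theorem encard_zeros_sum_sinh_lt {A : Finset (Ioi (0 : ℝ))} {b : Ioi (0 : ℝ) → ℝ}
    (hb : ∃ l ∈ A, b l ≠ 0) :
    {t ∈ Ioi 0 | ∑ l ∈ A, b l * sinh (l * t) = 0}.encard < #A := by
  set Z := {t ∈ Ioi (0 : ℝ) | ∑ l ∈ A, b l * sinh (l * t) = 0}
  let freq : Ioi (0 : ℝ) ⊕ Ioi (0 : ℝ) → ℝ := Sum.elim (fun l ↦ l) (fun l ↦ -l)
  let coef : Ioi (0 : ℝ) ⊕ Ioi (0 : ℝ) → ℝ := Sum.elim (fun l ↦ b l / 2) (fun l ↦ -b l / 2)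
  have hfreq : freq.Injective := Subtype.val_injective.sumElim
    (neg_injective.comp Subtype.val_injective) fun l l' ↦ by
      have := l.2.out; have := l'.2.out
      change (l : ℝ) ≠ -l'
      linarith
  have hexp := encard_zeros_sum_exp_lt (A := A.disjSum A) (l := freq) (b := coef) hfreq.injOn
    (by obtain ⟨l, hl, hbl⟩ := hb; exact ⟨.inl l, by simpa using hl, by simpa [coef] using hbl⟩)
  have hsum (t : ℝ) : ∑ i ∈ A.disjSum A, coef i * exp (freq i * t) =
      ∑ l ∈ A, b l * sinh (l * t) := by
    rw [Finset.sum_disjSum, ← Finset.sum_add_distrib]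
    refine Finset.sum_congr rfl fun l _ ↦ ?_
    simp only [freq, coef, Sum.elim_inl, Sum.elim_inr, sinh_eq]
    ring_nf
  have hsub : Z ∪ -Z ⊆ {t | ∑ i ∈ A.disjSum A, coef i * exp (freq i * t) = 0} := by
    simp only [hsum]
    rintro t (ht | ht)
    · exact ht.2
    · simpa using ht.2
  have hdisj : Disjoint Z (-Z) := disjoint_left.2 fun t ht ht' ↦ by
    have := ht.1.out; have := ht'.1.out
    linarith
  have htwice : Z.encard + Z.encard < (#A : ℕ∞) + #A := by
    calc Z.encard + Z.encard = (Z ∪ -Z).encard := by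
          rw [encard_union_eq hdisj, ← image_neg_eq_neg, neg_injective.encard_image]
      _ ≤ _ := encard_le_encard hsub
      _ < _ := by simpa using hexp
  exact lt_of_not_ge fun hle ↦ htwice.not_ge (add_le_add hle hle)

lemma sinh_isTheta_exp : sinh =Θ[atTop] exp := by
  refine ⟨.of_bound 1 ?_, .of_bound 4 ?_⟩ <;> filter_upwards [eventually_ge_atTop 1] with t ht <;>
    rw [norm_of_nonneg (exp_pos t).le, norm_of_nonneg (sinh_nonneg_iff.2 (by linarith)), sinh_eq]
  · linarith [exp_pos t, exp_pos (-t)]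
  · linarith [add_one_le_exp t, exp_le_one_iff.2 (by linarith : -t ≤ 0)]

lemma sinh_mul_isLittleO_sinh_mul {a b : ℝ} (ha : 0 < a) (hab : a < b) :
    (fun t ↦ sinh (a * t)) =o[atTop] fun t ↦ sinh (b * t) := by
  have hexp : (fun t ↦ exp (a * t)) =o[atTop] fun t ↦ exp (b * t) := by
    refine isLittleO_exp_comp_exp_comp.2 ?_
    simp only [← sub_mul]
    exact tendsto_id.const_mul_atTop (sub_pos.2 hab)
  have htheta {l : ℝ} (hl : 0 < l) : (fun t ↦ sinh (l * t)) =Θ[atTop] fun t ↦ exp (l * t) :=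
    ⟨sinh_isTheta_exp.1.comp_tendsto (tendsto_id.const_mul_atTop hl),
      sinh_isTheta_exp.2.comp_tendsto (tendsto_id.const_mul_atTop hl)⟩
  exact (htheta ha).trans_isLittleO (hexp.trans_isTheta (htheta (ha.trans hab)).symm)

/-- The functions `t ↦ sinh (l * t)`, indexed by their frequency `l > 0`. -/
noncomputable def sinhDilation (l : Ioi (0 : ℝ)) (t : ℝ) : ℝ := sinh (l * t)

theorem isChebyshevScale_sinhDilation :
    IsChebyshevScale sinhDilation (Ioi 0) where
  ordConnected := ordConnected_Ioi
  eventually_mem := eventually_gt_atTop 0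
  isHaarSpace A := isHaarSpace_span_image (Ioi_infinite 0)
    (fun _ _ ↦ by unfold sinhDilation; fun_prop) fun _ ↦ encard_zeros_sum_sinh_lt
  eventually_pos l := by
    filter_upwards [eventually_gt_atTop 0] with t ht
    exact sinh_pos_iff.2 (mul_pos l.2 ht)
  isLittleO {i j} hij := sinh_mul_isLittleO_sinh_mul i.2 hij

lemma convexOn_sinh : ConvexOn ℝ (Ici 0) sinh := by
  refine convexOn_of_deriv2_nonneg (convex_Ici 0) continuous_sinh.continuousOn
    differentiable_sinh.differentiableOn (by simpa using differentiable_cosh.differentiableOn)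
    fun x hx ↦ ?_
  rw [interior_Ici] at hx
  simpa using sinh_nonneg_iff.2 hx.out.le

lemma sinh_mul_le_mul_sinh {a h : ℝ} (ha : 0 ≤ a) (h0 : 0 ≤ h) (h1 : h ≤ 1) :
    sinh (a * h) ≤ h * sinh a := by
  have := convexOn_sinh.2 (mem_Ici.2 le_rfl) ha (sub_nonneg.2 h1) h0 (sub_add_cancel 1 h)
  simpa [mul_comm a] using this

/-- The frequency `(2 * j + 1) * ε`. -/
noncomputable def oddMultiple (ε : Ioi (0 : ℝ)) (j : ℕ) : Ioi (0 : ℝ) :=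
  ⟨(2 * j + 1) * ε, mul_pos (by positivity : (0 : ℝ) < 2 * j + 1) ε.2⟩

/-- The `n + 1` frequencies `ε, 3 * ε, …, (2 * n + 1) * ε` of the extremal hyperbolic sine sums. -/
noncomputable def oddMultiples (ε : Ioi (0 : ℝ)) (n : ℕ) : Finset (Ioi (0 : ℝ)) :=
  (Finset.range (n + 1)).image (oddMultiple ε)

lemma card_oddMultiples (ε : Ioi (0 : ℝ)) (n : ℕ) : #(oddMultiples ε n) = n + 1 := by
  refine (Finset.card_image_of_injective _ fun i j hij ↦ ?_).trans (Finset.card_range _)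
  simpa [oddMultiple, Subtype.ext_iff, ε.2.out.ne'] using hij

lemma exists_oddMultiples_lt (L : Finset (Ioi (0 : ℝ))) (n : ℕ) :
    ∃ ε, ∀ i ∈ oddMultiples ε n, ∀ l ∈ L, i < l := by
  obtain ⟨δ, hδ⟩ := L.bddBelow
  have hδ0 : (0 : ℝ) < δ := δ.2
  refine ⟨⟨δ / (2 * n + 2), mem_Ioi.2 (by positivity)⟩, fun i hi l hl ↦ lt_of_lt_of_le ?_ (hδ hl)⟩
  obtain ⟨j, hj, rfl⟩ := Finset.mem_image.1 hi
  have hjn : (j : ℝ) ≤ n := by exact_mod_cast Finset.mem_range_succ_iff.1 hj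
  change (2 * (j : ℝ) + 1) * ((δ : ℝ) / (2 * n + 2)) < δ
  rw [← mul_div_assoc, div_lt_iff₀ (by positivity)]
  nlinarith

lemma sinhDilation_mem_span_oddMultiples {ε : Ioi (0 : ℝ)} {j n : ℕ} (hj : j ≤ n) :
    sinhDilation (oddMultiple ε j) ∈ span ℝ (sinhDilation '' oddMultiples ε n) :=
  subset_span (mem_image_of_mem _
    (Finset.mem_image_of_mem _ (Finset.mem_range_succ_iff.2 hj)))

lemma span_oddMultiples_mono {ε : Ioi (0 : ℝ)} {m n : ℕ} (hmn : m ≤ n) :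
    span ℝ (sinhDilation '' oddMultiples ε m) ≤ span ℝ (sinhDilation '' oddMultiples ε n) :=
  span_mono (image_mono (by
    exact_mod_cast Finset.image_subset_image (Finset.range_mono (by omega))))

lemma cosh_two_mul_mul_sinhDilation_mem_span_oddMultiples {ε : Ioi (0 : ℝ)} {j n : ℕ}
    (hj : j ≤ n) : (fun t ↦ cosh (2 * (ε * t))) * sinhDilation (oddMultiple ε j) ∈
      span ℝ (sinhDilation '' oddMultiples ε (n + 1)) := by
  have hprod : (fun t ↦ cosh (2 * (ε * t))) * sinhDilation (oddMultiple ε j) = (2⁻¹ : ℝ) •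
      (sinhDilation (oddMultiple ε (j + 1)) + fun t ↦ sinh ((2 * j - 1) * (ε * t))) := by
    ext t
    have hadd : ((2 * (j + 1 : ℕ) + 1) * ε * t : ℝ) = (2 * j + 1) * ε * t + 2 * (ε * t) := by
      push_cast
      ring
    have hsub : ((2 * j - 1) * (ε * t) : ℝ) = (2 * j + 1) * ε * t - 2 * (ε * t) := by ring
    simp only [sinhDilation, oddMultiple, Pi.mul_apply, Pi.smul_apply, Pi.add_apply, smul_eq_mul,
      hadd, hsub, sinh_add, sinh_sub]
    ring
  rw [hprod]
  refine smul_mem _ _ (add_mem (sinhDilation_mem_span_oddMultiples (by omega)) ?_)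
  rcases j with - | j
  · convert neg_mem (sinhDilation_mem_span_oddMultiples (ε := ε) (Nat.zero_le (n + 1))) using 1
    ext t
    simp [sinhDilation, oddMultiple]
  · convert sinhDilation_mem_span_oddMultiples (ε := ε) (by omega : j ≤ n + 1) using 1
    ext t
    simp only [sinhDilation, oddMultiple]
    push_cast
    ring_nf

lemma cosh_two_mul_mul_mem_span_oddMultiples {ε : Ioi (0 : ℝ)} {n : ℕ} {f : ℝ → ℝ}
    (hf : f ∈ span ℝ (sinhDilation '' oddMultiples ε n)) :
    (fun t ↦ cosh (2 * (ε * t))) * f ∈ span ℝ (sinhDilation '' oddMultiples ε (n + 1)) := by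
  induction hf using span_induction with
  | mem g hg =>
    obtain ⟨_, hl, rfl⟩ := hg
    obtain ⟨j, hj, rfl⟩ := Finset.mem_image.1 hl
    exact cosh_two_mul_mul_sinhDilation_mem_span_oddMultiples (Finset.mem_range_succ_iff.1 hj)
  | zero => simp
  | add _ _ _ _ hg hg' => rw [mul_add]; exact add_mem hg hg'
  | smul c _ _ hg => rw [mul_smul_comm]; exact smul_mem _ c hg

lemma two_mul_cos_two_mul_of_sinh_eq_mul_sin {σ τ θ : ℝ} (hσ : σ ≠ 0)
    (h : sinh τ = σ * sin θ) :
    2 * cos (2 * θ) = 2 + 2 / σ ^ 2 - 2 / σ ^ 2 * cosh (2 * τ) := by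
  rw [cosh_two_mul, cosh_sq, h, cos_two_mul, cos_sq']
  field_simp
  ring

theorem exists_mem_span_oddMultiples_eq_sin (ε : Ioi (0 : ℝ)) {σ : ℝ} (hσ : σ ≠ 0) (n : ℕ) :
    ∃ f ∈ span ℝ (sinhDilation '' oddMultiples ε n),
      ∀ t θ, sinh (ε * t) = σ * sin θ → f t = sin ((2 * n + 1) * θ) := by
  suffices h : ∃ f ∈ span ℝ (sinhDilation '' oddMultiples ε n),
      ∃ g ∈ span ℝ (sinhDilation '' oddMultiples ε n), ∀ t θ, sinh (ε * t) = σ * sin θ →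
        f t = sin ((2 * n + 1) * θ) ∧ g t = sin ((2 * n + 1) * θ - 2 * θ) by
    obtain ⟨f, hf, _, _, hfg⟩ := h
    exact ⟨f, hf, fun t θ h ↦ (hfg t θ h).1⟩
  induction n with
  | zero =>
    have hmem := smul_mem _ σ⁻¹ (sinhDilation_mem_span_oddMultiples (ε := ε) (le_refl 0))
    refine ⟨_, hmem, _, neg_mem hmem, fun t θ h ↦ ⟨?_, ?_⟩⟩
    · simp [sinhDilation, oddMultiple, h, hσ]
    · simp [sinhDilation, oddMultiple, h, hσ, show θ - 2 * θ = -θ by ring]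
  | succ n ih =>
    obtain ⟨f, hf, g, hg, hfg⟩ := ih
    have hmono := span_oddMultiples_mono (ε := ε) n.le_succ
    refine ⟨(2 + 2 / σ ^ 2) • f - (2 / σ ^ 2) • ((fun t ↦ cosh (2 * (ε * t))) * f) - g,
      sub_mem (sub_mem (smul_mem _ _ (hmono hf))
        (smul_mem _ _ (cosh_two_mul_mul_mem_span_oddMultiples hf))) (hmono hg),
      f, hmono hf, fun t θ h ↦ ?_⟩
    obtain ⟨hft, hgt⟩ := hfg t θ h
    have hangle : (2 * (n + 1 : ℕ) + 1) * θ = (2 * n + 1) * θ + 2 * θ := by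
      push_cast
      ring
    rw [hangle, add_sub_cancel_right]
    refine ⟨?_, hft⟩
    calc _ = f t * (2 + 2 / σ ^ 2 - 2 / σ ^ 2 * cosh (2 * (ε * t))) - g t := by
          simp only [Pi.sub_apply, Pi.smul_apply, Pi.mul_apply, smul_eq_mul]
          ring
      _ = 2 * sin ((2 * n + 1) * θ) * cos (2 * θ) - sin ((2 * n + 1) * θ - 2 * θ) := by
          rw [← two_mul_cos_two_mul_of_sinh_eq_mul_sin hσ h, hft, hgt]
          ring
      _ = sin ((2 * n + 1) * θ + 2 * θ) := by
          rw [two_mul_sin_mul_cos, add_sub_cancel_left]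

lemma strictMono_sin_odd_mul (n : ℕ) :
    StrictMono fun i : Fin (n + 1) ↦ sin ((2 * i + 1) * (π / 2 / (2 * n + 1))) := by
  have hangle (i : Fin (n + 1)) : (2 * i + 1) * (π / 2 / (2 * n + 1)) ∈ Icc (-(π / 2)) (π / 2) := by
    have hi : (i : ℝ) ≤ n := by exact_mod_cast i.is_le
    have hpi := pi_pos
    refine ⟨le_trans (by linarith) (by positivity : (0 : ℝ) ≤ _), ?_⟩
    rw [← mul_div_assoc, div_le_iff₀ (by positivity)]
    nlinarith
  intro i j hij
  refine strictMonoOn_sin (hangle i) (hangle j) ?_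
  have hij' : (i : ℝ) < j := by exact_mod_cast hij
  gcongr

lemma exists_strictMono_sinh_mul_eq_sinh_mul_sin (ε : Ioi (0 : ℝ)) (n : ℕ) {h : ℝ} (h0 : 0 < h)
    (hh : h < sin (π / 2 / (2 * n + 1))) :
    ∃ y : Fin (n + 2) → ℝ, StrictMono y ∧ y 0 = h ∧ (∀ i, y i ∈ Ioc 0 1) ∧
      ∀ i : Fin (n + 1),
        sinh (ε * y i.succ) = sinh ε * sin ((2 * i + 1) * (π / 2 / (2 * n + 1))) := by
  have hε : (0 : ℝ) < ε := ε.2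
  have hσ : 0 < sinh ε := sinh_pos_iff.2 hε
  set s : Fin (n + 1) → ℝ := fun i ↦ sin ((2 * i + 1) * (π / 2 / (2 * n + 1)))
  have hs : StrictMono s := strictMono_sin_odd_mul n
  let x (i : Fin (n + 1)) : ℝ := arsinh (sinh ε * s i) / ε
  have hsinh (i) : sinh (ε * x i) = sinh ε * s i := by
    rw [mul_div_cancel₀ _ hε.ne', sinh_arsinh]
  have hx : StrictMono x := fun i j hij ↦ by
    have harsinh := arsinh_lt_arsinh.2 (mul_lt_mul_of_pos_left (hs hij) hσ)
    exact div_lt_div_of_pos_right harsinh hε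
  have hx1 (i) : x i ≤ 1 := by
    refine (div_le_one hε).2 ((arsinh_le_arsinh.2 ?_).trans_eq (arsinh_sinh ε))
    exact mul_le_of_le_one_right hσ.le (sin_le_one _)
  have hhx : ∀ i, h < x i := fun i ↦ by
    refine lt_of_lt_of_le ?_ (hx.monotone (Fin.zero_le i))
    have h1 : h ≤ 1 := hh.le.trans (sin_le_one _)
    have hlt : sinh (ε * h) < sinh (ε * x 0) := by
      rw [hsinh]
      calc sinh (ε * h) ≤ h * sinh ε := sinh_mul_le_mul_sinh hε.le h0.le h1
        _ < sinh ε * s 0 := by rw [mul_comm]; gcongr; simpa [s] using hh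
    exact lt_of_mul_lt_mul_left (sinh_lt_sinh.1 hlt) hε.le
  refine ⟨Fin.cons h x, Fin.strictMono_cons.2 ⟨hhx, hx⟩, rfl, Fin.cases ?_ fun i ↦ ?_, hsinh⟩
  · exact ⟨h0, (hhx 0).le.trans (hx1 0)⟩
  · exact ⟨h0.trans (hhx i), hx1 i⟩

theorem exists_alternating_mem_span_oddMultiples (ε : Ioi (0 : ℝ)) (n : ℕ) {h : ℝ} (h0 : 0 < h)
    (hh : h < sin (π / 2 / (2 * n + 1))) :
    ∃ y : Fin (n + 2) → ℝ, StrictMono y ∧ y 0 = h ∧ (∀ i, y i ∈ Ioc 0 1) ∧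
      ∃ p ∈ span ℝ (sinhDilation '' oddMultiples ε n),
        (∀ i : Fin (n + 1), p (y i.succ) = (-1) ^ (i : ℕ)) ∧ p h ≤ (2 * n + 1) * arcsin h := by
  have hε : (0 : ℝ) < ε := ε.2
  have hσ : 0 < sinh ε := sinh_pos_iff.2 hε
  obtain ⟨y, hy, hy0, hymem, hysinh⟩ := exists_strictMono_sinh_mul_eq_sinh_mul_sin ε n h0 hh
  obtain ⟨p, hp, hpsin⟩ := exists_mem_span_oddMultiples_eq_sin ε hσ.ne' n
  refine ⟨y, hy, hy0, hymem, p, hp, fun i ↦ ?_, ?_⟩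
  · rw [hpsin _ _ (hysinh i), ← cos_nat_mul_pi, ← sin_add_pi_div_two]
    congr 1
    field_simp
  · have h1 : h ≤ 1 := hh.le.trans (sin_le_one _)
    have hratio : sinh (ε * h) / sinh ε ≤ h :=
      (div_le_iff₀ hσ).2 (sinh_mul_le_mul_sinh hε.le h0.le h1)
    have hratio0 : 0 ≤ sinh (ε * h) / sinh ε :=
      div_nonneg (sinh_nonneg_iff.2 (by positivity)) hσ.le
    have hsin : sinh (ε * h) = sinh ε * sin (arcsin (sinh (ε * h) / sinh ε)) := by
      rw [sin_arcsin (by linarith) (hratio.trans h1), mul_div_cancel₀ _ hσ.ne']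
    calc p h = sin ((2 * n + 1) * arcsin (sinh (ε * h) / sinh ε)) := hpsin _ _ hsin
      _ ≤ (2 * n + 1) * arcsin (sinh (ε * h) / sinh ε) :=
        sin_le (mul_nonneg (by positivity) (arcsin_nonneg.2 hratio0))
      _ ≤ (2 * n + 1) * arcsin h := by gcongr

theorem apply_le_of_mem_span_sinhDilation {L : Finset (Ioi (0 : ℝ))} {n : ℕ} (hL : #L = n + 1)
    {f : ℝ → ℝ} (hf : f ∈ span ℝ (sinhDilation '' L)) {B : ℝ} (hB : ∀ t ∈ Ioc 0 1, |f t| ≤ B)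
    {h : ℝ} (h0 : 0 < h) (hh : h < sin (π / 2 / (2 * n + 1))) :
    f h ≤ (2 * n + 1) * arcsin h * B := by
  have hφ := isChebyshevScale_sinhDilation
  have hH := hL ▸ hφ.isHaarSpace L
  have hB0 : 0 ≤ B := (abs_nonneg _).trans (hB 1 (by simp))
  obtain ⟨ε, hε⟩ := exists_oddMultiples_lt L n
  obtain ⟨y, hy, rfl, hymem, p, hp, hpalt, hph⟩ :=
    exists_alternating_mem_span_oddMultiples ε n h0 hh
  obtain ⟨q, hq, hqalt⟩ := hH.exists_interpolant (hy.injective.comp (Fin.succ_injective _))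
    (fun i ↦ (hymem i.succ).1) fun i ↦ (-1) ^ (i : ℕ)
  have hys (i) : y i ∈ Ioi 0 := (hymem i).1
  have hfq : f (y 0) ≤ B * q (y 0) := by
    refine sub_nonpos.1 (hH.apply_zero_nonpos_of_alternating hφ.ordConnected hy hys
      (sub_mem hf (smul_mem _ B hq)) fun i ↦ ?_)
    have hqi : q (y i.succ) = (-1) ^ (i : ℕ) := hqalt i
    have hfi := abs_le.1 (hB _ (hymem i.succ))
    simp only [Pi.sub_apply, Pi.smul_apply, smul_eq_mul, hqi]
    rcases neg_one_pow_eq_or ℝ (i : ℕ) with hsign | hsign <;> rw [hsign] <;> linarith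
  have hcard := card_oddMultiples ε n
  have hqp : q (y 0) ≤ p (y 0) :=
    hφ.apply_le_of_forall_lt hε hcard hL hy hys hp hq hpalt hqalt
  calc f (y 0) ≤ B * q (y 0) := hfq
    _ ≤ B * ((2 * n + 1) * arcsin (y 0)) := by gcongr; exact hqp.trans hph
    _ = _ := mul_comm _ _

theorem abs_apply_le_of_mem_span_sinhDilation {L : Finset (Ioi (0 : ℝ))} {f : ℝ → ℝ}
    (hf : f ∈ span ℝ (sinhDilation '' L)) {B : ℝ} (hB : ∀ t ∈ Ioc 0 1, |f t| ≤ B) {h : ℝ}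
    (hh : h ∈ Ioc 0 1) : |f h| ≤ 2 * #L * arcsin h * B := by
  have hB0 : 0 ≤ B := (abs_nonneg _).trans (hB h hh)
  have harc : 0 ≤ arcsin h := arcsin_nonneg.2 hh.1.le
  rcases hn : #L with - | n
  · obtain rfl : L = ∅ := Finset.card_eq_zero.1 hn
    obtain rfl : f = 0 := by simpa using hf
    simp
  suffices hsharp : |f h| ≤ (2 * n + 1) * arcsin h * B by
    refine hsharp.trans ?_
    gcongr
    push_cast
    linarith
  rcases lt_or_ge h (sin (π / 2 / (2 * n + 1))) with hsmall | hlarge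
  · refine abs_le'.2 ⟨apply_le_of_mem_span_sinhDilation hn hf hB hh.1 hsmall, ?_⟩
    exact apply_le_of_mem_span_sinhDilation hn (neg_mem hf)
      (fun t ht ↦ by simpa using hB t ht) hh.1 hsmall
  · have hangle : π / 2 / (2 * n + 1) ≤ arcsin h := by
      have hpos : 0 < π / 2 / (2 * n + 1) := by positivity
      have hle : π / 2 / (2 * n + 1) ≤ π / 2 :=
        div_le_self (by positivity) (by linarith [n.cast_nonneg (α := ℝ)])
      exact (le_arcsin_iff_sin_le' ⟨by linarith, hle⟩).2 hlarge
    have hone : 1 ≤ (2 * n + 1) * arcsin h := by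
      rw [div_le_iff₀' (by positivity)] at hangle
      linarith [pi_gt_three]
    exact (hB h hh).trans (le_mul_of_one_le_left hB0 hone)

lemma sinh_mul_mem_span_sinhDilation {L : Finset (Ioi (0 : ℝ))} {a : ℝ}
    (ha : ∀ l : Ioi (0 : ℝ), (l : ℝ) = |a| → l ∈ L) :
    (fun t ↦ sinh (a * t)) ∈ span ℝ (sinhDilation '' L) := by
  rcases lt_trichotomy a 0 with hneg | rfl | hpos
  · have hmem : (⟨-a, neg_pos.2 hneg⟩ : Ioi (0 : ℝ)) ∈ L := ha _ (abs_of_neg hneg).symm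
    have hodd : (fun t ↦ sinh (a * t)) = -sinhDilation ⟨-a, neg_pos.2 hneg⟩ := by
      ext t
      simp [sinhDilation]
    rw [hodd]
    exact neg_mem (subset_span (mem_image_of_mem sinhDilation hmem))
  · simp [← Pi.zero_def]
  · exact subset_span (mem_image_of_mem sinhDilation (ha ⟨a, hpos⟩ (abs_of_pos hpos).symm))

theorem abs_sum_mul_sinh_le {ι : Type*} (s : Finset ι) (a b : ι → ℝ) {B : ℝ}
    (hB : ∀ t ∈ Ioc 0 1, |∑ i ∈ s, b i * sinh (a i * t)| ≤ B) {h : ℝ} (hh : h ∈ Ioc 0 1) :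
    |∑ i ∈ s, b i * sinh (a i * h)| ≤ 2 * #s * arcsin h * B := by
  classical
  let L : Finset (Ioi (0 : ℝ)) := (s.image fun i ↦ |a i|).subtype (· ∈ Ioi 0)
  have hcard : #L ≤ #s := by
    rw [Finset.card_subtype]
    exact (Finset.card_filter_le _ _).trans Finset.card_image_le
  have hmem : ∑ i ∈ s, b i • (fun t ↦ sinh (a i * t)) ∈ span ℝ (sinhDilation '' L) :=
    sum_mem fun i hi ↦ smul_mem _ _ <| sinh_mul_mem_span_sinhDilation fun l hl ↦
      Finset.mem_subtype.2 (hl ▸ Finset.mem_image_of_mem _ hi)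
  have hbound := abs_apply_le_of_mem_span_sinhDilation hmem (B := B) (by simpa using hB) hh
  simp only [Finset.sum_apply, Pi.smul_apply, smul_eq_mul] at hbound
  have hB0 : 0 ≤ B := (abs_nonneg _).trans (hB h hh)
  have harc : 0 ≤ arcsin h := arcsin_nonneg.2 hh.1.le
  exact hbound.trans (by gcongr)

lemma arcsin_le_div_sqrt {x : ℝ} (hx0 : 0 ≤ x) (hx1 : x < 1) : arcsin x ≤ x / √(1 - x ^ 2) :=
  (le_tan (arcsin_nonneg.2 hx0) (arcsin_lt_pi_div_two.2 hx1)).trans_eq (tan_arcsin x)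

lemma arcsin_inv_two_mul_add_one_le {t : ℝ} (ht : 0 < t) : arcsin (2 * t + 1)⁻¹ ≤ (2 * t)⁻¹ := by
  refine (arcsin_le_div_sqrt (by positivity) (inv_lt_one_of_one_lt₀ (by linarith))).trans ?_
  have hsqrt : 2 * t / (2 * t + 1) ≤ √(1 - (2 * t + 1)⁻¹ ^ 2) := by
    refine le_sqrt_of_sq_le ?_
    field_simp
    nlinarith
  calc (2 * t + 1)⁻¹ / √(1 - (2 * t + 1)⁻¹ ^ 2) ≤ (2 * t + 1)⁻¹ / (2 * t / (2 * t + 1)) := by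
        gcongr
    _ = (2 * t)⁻¹ := by field_simp

lemma rpow_add_sub_rpow_sub {γ : ℝ} (hγ : 0 < γ) (d w : ℝ) :
    γ ^ (d + w) - γ ^ (d - w) = 2 * γ ^ d * sinh (log γ * w) := by
  rw [sub_eq_add_neg d, rpow_add hγ, rpow_add hγ, rpow_def_of_pos hγ w, rpow_def_of_pos hγ (-w),
    sinh_eq, mul_neg]
  ring

theorem stmt14_general {ι : Type*} (s : Finset ι) (c₀ : ℝ) (c γ : ι → ℝ)
    (hγ : ∀ i ∈ s, 0 < γ i) {t B : ℝ} (ht : 0 < t)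
    (hB : ∀ x ∈ Icc 0 (2 * t + 1), |c₀ + ∑ i ∈ s, c i * γ i ^ x| ≤ B) :
    |(c₀ + ∑ i ∈ s, c i * γ i ^ (t + 1)) - (c₀ + ∑ i ∈ s, c i * γ i ^ t)| ≤
      2 * #s / t * B := by
  set u : ℝ → ℝ := fun x ↦ c₀ + ∑ i ∈ s, c i * γ i ^ x
  set d : ℝ := t + 1 / 2 with hd
  have hodd (z : ℝ) : ∑ i ∈ s, c i * γ i ^ d * sinh (d * log (γ i) * z) =
      (u (d + d * z) - u (d - d * z)) / 2 := by
    rw [add_sub_add_left_eq_sub, ← Finset.sum_sub_distrib, Finset.sum_div]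
    refine Finset.sum_congr rfl fun i hi ↦ ?_
    rw [← mul_sub, rpow_add_sub_rpow_sub (hγ i hi)]
    ring_nf
  have hbound : ∀ z ∈ Ioc 0 1, |∑ i ∈ s, c i * γ i ^ d * sinh (d * log (γ i) * z)| ≤ B := by
    rintro z ⟨hz0, hz1⟩
    have hplus := abs_le.1 (hB (d + d * z) ⟨by positivity, by nlinarith⟩)
    have hminus := abs_le.1 (hB (d - d * z) ⟨by nlinarith, by nlinarith⟩)
    rw [hodd, abs_le]
    constructor <;> linarith
  have hB0 : 0 ≤ B := (abs_nonneg _).trans (hbound 1 (by simp))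
  have hh : (2 * t + 1)⁻¹ ∈ Ioc (0 : ℝ) 1 :=
    ⟨by positivity, inv_le_one_of_one_le₀ (by linarith)⟩
  have hdh : d * (2 * t + 1)⁻¹ = 1 / 2 := by rw [hd]; field_simp
  have hest := abs_sum_mul_sinh_le s _ _ hbound hh
  rw [hodd, hdh, hd, add_assoc, add_halves, add_sub_cancel_right, abs_div, abs_two] at hest
  calc |u (t + 1) - u t| ≤ 2 * (2 * #s * arcsin (2 * t + 1)⁻¹ * B) := by linarith
    _ ≤ 2 * (2 * #s * (2 * t)⁻¹ * B) := by gcongr; exact arcsin_inv_two_mul_add_one_le ht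
    _ = 2 * #s / t * B := by field_simp

/-- Discrete Markov-type inequality for exponential sums (Borwein–Erdélyi):
if `u(s) = c₀ + Σ_{i=1}^m cᵢ γᵢ^s` with `γᵢ > 0` and `|u| ≤ B` on `[0, ∞)`,
then `|u(t+1) − u(t)| ≤ (2m/t)·B` for every integer `t ≥ 1`. -/
theorem stmt14 (m : ℕ) (c : ℕ → ℝ) (γ : ℕ → ℝ) (hγ : ∀ i, 0 < γ i)
    (u : ℝ → ℝ)
    (hu : ∀ s : ℝ, u s = c 0 + ∑ i ∈ Finset.range m, c (i + 1) * (γ i) ^ s)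
    (t : ℕ) (ht : 1 ≤ t) (B : ℝ) (hB : ∀ s : ℝ, 0 ≤ s → |u s| ≤ B) :
    |u ((t : ℝ) + 1) - u (t : ℝ)| ≤ (2 * (m : ℝ) / (t : ℝ)) * B := by
  simpa only [Finset.card_range, ← hu] using
    stmt14_general (Finset.range m) (c 0) (fun i ↦ c (i + 1)) γ (fun i _ ↦ hγ i)
      (Nat.cast_pos.2 ht) fun x hx ↦ hu x ▸ hB x hx.1
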